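/- Let m, n ≥ 2 and let d be the shortest-path metric of the complete bipartite graph K_{m,n}, i.e. on the vertex set Fin m ⊕ Fin n one has d(u,u) = 0, d(u,v) = 1 if u and v lie in different parts, and d(u,v) = 2 if u ≠ v lie in the same part. Then for every α with 0 < α ≤ 1, the function d^α(u,v) := (d(u,v))^α is Euclidean if and only if 4^α ≤ 2/(2 − 1/m − 1/n). Consequently, for every α > 0 there exist m, n ≥ 2 such that d^α is not Euclidean. -/

import Mathlib

/-!
Put `s = 4 ^ α`, the squared distance between distinct vertices of one part.  For any realization
`Φ`, the squared distance between the centroids of the two parts is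
`1 - (s / 2) * (1 - 1 / m) - (s / 2) * (1 - 1 / n)`, so this number is nonnegative
(`four_rpow_mul_le_of_isEuclidean`).  Conversely, when it is `h ^ 2` with `h` real, two regular
simplices of side `√s`, spanning orthogonal subspaces and with centroids displaced by `h` in a
direction orthogonal to both, realize the distance (`bipartitePoint`).  The necessary condition
holds for every `α`, and for `m = n` large it fails because `4 ^ α > 1`.
-/

/-- A function `d : X → X → ℝ` is Euclidean if it is realized as the norm-distance of a map
into a real inner product space. -/
def IsEuclidean {X : Type*} (d : X → X → ℝ) : Prop :=
  ∃ (H : Type) (inst : NormedAddCommGroup H),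
    letI := inst
    ∃ (_ : InnerProductSpace ℝ H) (Φ : X → H),
      ∀ x y, ‖Φ x - Φ y‖ = d x y

/-- The shortest-path metric of the complete bipartite graph `K_{m,n}` on `Fin m ⊕ Fin n`:
`0` on the diagonal, `1` between vertices in different parts, `2` between distinct vertices
in the same part. -/
def bipartiteDist (m n : ℕ) (u v : Fin m ⊕ Fin n) : ℝ :=
  if u = v then 0 else if u.isLeft = v.isLeft then 2 else 1

lemma sq_bipartiteDist_rpow {α : ℝ} (hα : 0 < α) (m n : ℕ) (u v : Fin m ⊕ Fin n) :
    (bipartiteDist m n u v ^ α) ^ 2 =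
      if u = v then 0 else if u.isLeft = v.isLeft then (4 : ℝ) ^ α else 1 := by
  unfold bipartiteDist
  split_ifs
  · simp [Real.zero_rpow hα.ne']
  · rw [← Real.rpow_natCast, ← Real.rpow_mul (by norm_num), mul_comm, Real.rpow_mul (by norm_num)]
    norm_num
  · simp

lemma sum_ite_eq_zero_else {m : ℕ} (i : Fin m) (s : ℝ) :
    ∑ k : Fin m, (if i = k then 0 else s) = (m - 1) * s := by
  have h : ∀ k : Fin m, (if i = k then (0 : ℝ) else s) = s - if i = k then s else 0 := by
    intro k; split_ifs <;> simp
  simp only [h, Finset.sum_sub_distrib]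
  simp
  ring

/-- The squared distance between the centroids of the two parts is nonnegative. -/
lemma four_rpow_mul_le_of_isEuclidean {m n : ℕ} (hm : 2 ≤ m) (hn : 2 ≤ n) {α : ℝ} (hα : 0 < α)
    (h : IsEuclidean (fun u v : Fin m ⊕ Fin n => bipartiteDist m n u v ^ α)) :
    (4 : ℝ) ^ α * (2 - 1 / (m : ℝ) - 1 / (n : ℝ)) ≤ 2 := by
  obtain ⟨H, inst, inst', Φ, hΦ⟩ := h
  have hm0 : (m : ℝ) ≠ 0 := by positivity
  have hn0 : (n : ℝ) ≠ 0 := by positivity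
  -- `∑ u, w u • Φ u` is the difference of the two centroids
  let w : Fin m ⊕ Fin n → ℝ := Sum.elim (fun _ => 1 / (m : ℝ)) (fun _ => -(1 / (n : ℝ)))
  have hw : ∑ u, w u = 0 := by
    simp [w, hm0, hn0]
  have key := inner_sum_smul_sum_smul_of_sum_eq_zero (F := H) Φ hw Φ hw
  have hpos : 0 ≤ inner ℝ (∑ u, w u • Φ u) (∑ u, w u • Φ u) := real_inner_self_nonneg
  rw [key] at hpos
  simp only [hΦ, ← pow_two, sq_bipartiteDist_rpow hα] at hpos
  simp only [Fintype.sum_sum_type, w, Sum.elim_inl, Sum.elim_inr, Sum.inl.injEq, Sum.inr.injEq,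
    reduceCtorEq, Sum.isLeft_inl, Sum.isLeft_inr, if_true, if_false, ← Finset.mul_sum,
    sum_ite_eq_zero_else, Finset.sum_const, Finset.card_univ, Fintype.card_fin, nsmul_eq_mul,
    Bool.true_eq_false, Bool.false_eq_true] at hpos
  field_simp at hpos ⊢
  linarith

/-- The vertices of two regular simplices with edge length `√2 * c`, centred at the origin and
at the point `h` of the third summand, and lying in the directions of the first and the second
summand of the coordinate space. -/
noncomputable def bipartitePoint (m n : ℕ) (c h : ℝ) :
    Fin m ⊕ Fin n → EuclideanSpace ℝ (Fin m ⊕ Fin n ⊕ Unit)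
  | Sum.inl i => WithLp.toLp 2 (Sum.elim (fun k => c * ((if i = k then 1 else 0) - 1 / (m : ℝ)))
      (fun _ => 0))
  | Sum.inr j => WithLp.toLp 2 (Sum.elim (fun _ => 0)
      (Sum.elim (fun k => c * ((if j = k then 1 else 0) - 1 / (n : ℝ))) (fun _ => h)))

lemma sum_sq_sub_indicator {m : ℕ} {i j : Fin m} (hij : i ≠ j) (c a : ℝ) :
    ∑ k : Fin m, (c * ((if i = k then 1 else 0) - a) - c * ((if j = k then 1 else 0) - a)) ^ 2
      = 2 * c ^ 2 := by
  have h : ∀ k : Fin m,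
      (c * ((if i = k then 1 else 0) - a) - c * ((if j = k then 1 else 0) - a)) ^ 2
        = (if i = k then c ^ 2 else 0) + (if j = k then c ^ 2 else 0) := by
    intro k
    split_ifs with h1 h2
    · exact absurd (h1.trans h2.symm) hij
    all_goals ring
  simp only [h, Finset.sum_add_distrib]
  simp
  ring

lemma sum_sq_indicator_sub_mean {m : ℕ} (hm : 2 ≤ m) (i : Fin m) (c : ℝ) :
    ∑ k : Fin m, (c * ((if i = k then 1 else 0) - 1 / (m : ℝ))) ^ 2
      = c ^ 2 * (1 - 1 / (m : ℝ)) := by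
  have hm0 : (m : ℝ) ≠ 0 := by positivity
  have h : ∀ k : Fin m, (c * ((if i = k then 1 else 0) - 1 / (m : ℝ))) ^ 2
        = (if i = k then c ^ 2 * (1 - 2 / (m : ℝ)) else 0) + c ^ 2 / (m : ℝ) ^ 2 := by
    intro k
    split_ifs <;> ring
  simp only [h, Finset.sum_add_distrib]
  simp
  field_simp
  ring

lemma isEuclidean_of_four_rpow_mul_le {m n : ℕ} (hm : 2 ≤ m) (hn : 2 ≤ n) {α : ℝ} (hα : 0 < α)
    (hle : (4 : ℝ) ^ α * (2 - 1 / (m : ℝ) - 1 / (n : ℝ)) ≤ 2) :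
    IsEuclidean (fun u v : Fin m ⊕ Fin n => bipartiteDist m n u v ^ α) := by
  obtain ⟨c, hc⟩ : ∃ c : ℝ, c ^ 2 = 4 ^ α / 2 := ⟨_, Real.sq_sqrt (by positivity)⟩
  obtain ⟨h, hh⟩ : ∃ h : ℝ, h ^ 2 = 1 - 4 ^ α / 2 * (2 - 1 / (m : ℝ) - 1 / (n : ℝ)) :=
    ⟨_, Real.sq_sqrt (by linarith)⟩
  refine ⟨EuclideanSpace ℝ (Fin m ⊕ Fin n ⊕ Unit), inferInstance, inferInstance,
    bipartitePoint m n c h, fun u v => ?_⟩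
  have hd : 0 ≤ bipartiteDist m n u v := by
    unfold bipartiteDist; split_ifs <;> norm_num
  rw [← sq_eq_sq₀ (norm_nonneg _) (Real.rpow_nonneg hd α), sq_bipartiteDist_rpow hα,
    EuclideanSpace.real_norm_sq_eq]
  by_cases huv : u = v
  · simp [huv]
  rw [if_neg huv]
  rcases u with i | i <;> rcases v with j | j <;>
    simp only [bipartitePoint, Fintype.sum_sum_type, PiLp.sub_apply, Sum.elim_inl, Sum.elim_inr,
      sub_zero, zero_sub, neg_sq, Sum.isLeft_inl, Sum.isLeft_inr, if_true, if_false,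
      Bool.true_eq_false, Bool.false_eq_true, sum_sq_indicator_sub_mean hm,
      sum_sq_indicator_sub_mean hn]
  · rw [sum_sq_sub_indicator (by simpa using huv)]
    simp [hc]
    ring
  · simp [hc, hh]
    ring
  · simp [hc, hh]
    ring
  · rw [sum_sq_sub_indicator (by simpa using huv)]
    simp [hc]
    ring

/-- For `m, n ≥ 2` and `0 < α ≤ 1`, the α-th power of the path metric of `K_{m,n}` is
Euclidean iff `4^α ≤ 2/(2 - 1/m - 1/n)`; consequently, for every `α > 0` there are
`m, n ≥ 2` for which it is not Euclidean. -/
theorem bipartite_rpow_euclidean_iff :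
    (∀ (m n : ℕ), 2 ≤ m → 2 ≤ n → ∀ α : ℝ, 0 < α → α ≤ 1 →
      (IsEuclidean (fun u v : Fin m ⊕ Fin n => bipartiteDist m n u v ^ α) ↔
        (4 : ℝ) ^ α ≤ 2 / (2 - 1 / (m : ℝ) - 1 / (n : ℝ)))) ∧
    (∀ α : ℝ, 0 < α → ∃ m n : ℕ, 2 ≤ m ∧ 2 ≤ n ∧
      ¬ IsEuclidean (fun u v : Fin m ⊕ Fin n => bipartiteDist m n u v ^ α)) := by
  constructor
  · intro m n hm hn α hα _
    have half_bound : ∀ k : ℕ, 2 ≤ k → 1 / (k : ℝ) ≤ 1 / 2 := fun k hk =>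
      one_div_le_one_div_of_le (by norm_num) (by exact_mod_cast hk)
    have hpos : 0 < 2 - 1 / (m : ℝ) - 1 / (n : ℝ) := by
      linarith [half_bound m hm, half_bound n hn]
    rw [le_div_iff₀ hpos]
    exact ⟨four_rpow_mul_le_of_isEuclidean hm hn hα, isEuclidean_of_four_rpow_mul_le hm hn hα⟩
  · intro α hα
    have hs : 1 < (4 : ℝ) ^ α := Real.one_lt_rpow (by norm_num) hα
    -- for `m = n = N` the necessary condition reads `4 ^ α * (N - 1) ≤ N`
    obtain ⟨N, hN⟩ := exists_nat_gt ((4 : ℝ) ^ α / (4 ^ α - 1))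
    rw [div_lt_iff₀ (by linarith)] at hN
    have hN1 : (1 : ℝ) < N := by nlinarith
    have hN2 : 2 ≤ N := by exact_mod_cast hN1
    refine ⟨N, N, hN2, hN2, fun hE => ?_⟩
    have := four_rpow_mul_le_of_isEuclidean hN2 hN2 hα hE
    have hN0 : (0 : ℝ) < N := by linarith
    field_simp at this
    linarith
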